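/- arXiv:1909.03874 — 2 statements merged into one kernel-verified Lean document; each statement's English description precedes it below -/
import Mathlib

section
/- Let λ be a partition with degree vector n_1 > … > n_ℓ, let p be the number of odd entries and q the number of even entries of the degree vector, set k = p − q if p ≥ q and k = q − p − 1 otherwise, and m = k(k+1)/2. Then the coefficient of X^m in He_λ satisfies |coeff_m(He_λ)| · ∏_{i=1}^{k} (2i−1)^{k+1−i} = H_odd(λ), i.e. the absolute value of the constant term of the remainder polynomial equals H_odd(λ)/H(δ_k), where δ_k = (k, k−1, …, 2, 1) is the staircase partition and H(δ_k) = ∏_{i=1}^{k} (2i−1)^{k+1−i} is the product of its hook lengths. -/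
/-- A partition: a weakly decreasing list of positive integers. -/
def IsPartition (l : List ℕ) : Prop :=
  l.Pairwise (· ≥ ·) ∧ ∀ x ∈ l, 0 < x

/-- The degree vector of a partition: `n_i = λ_i + ℓ(λ) − i` (here `i` is 0-indexed). -/
def degVec (l : List ℕ) (i : Fin l.length) : ℕ :=
  l.get i + (l.length - 1 - (i : ℕ))

/-- The Vandermonde determinant `Δ(n_λ) = ∏_{i<j} (n_j − n_i)` of the degree vector. -/
noncomputable def vanderQ (l : List ℕ) : ℚ :=
  ∏ i : Fin l.length, ∏ j : Fin l.length,
    if (i : ℕ) < (j : ℕ) then ((degVec l j : ℚ) - (degVec l i : ℚ)) else 1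

/-- The Wronskian Hermite polynomial `He_λ = Wr[He_{n_1},…,He_{n_ℓ}] / Δ(n_λ)`. -/
noncomputable def HeW (l : List ℕ) : Polynomial ℚ :=
  Polynomial.C (vanderQ l)⁻¹ *
    (Matrix.of fun i j : Fin l.length =>
      (⇑Polynomial.derivative)^[(i : ℕ)]
        ((Polynomial.hermite (degVec l j)).map (Int.castRingHom ℚ))).det

/-- The number of odd entries of the degree vector. -/
def oddCount (l : List ℕ) : ℕ :=
  (Finset.univ.filter fun i : Fin l.length => Odd (degVec l i)).card

/-- The number of even entries of the degree vector. -/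
def evenCount (l : List ℕ) : ℕ :=
  (Finset.univ.filter fun i : Fin l.length => Even (degVec l i)).card

/-- `k = p − q` if `p ≥ q`, and `k = q − p − 1` otherwise. -/
def coreK (l : List ℕ) : ℕ :=
  if evenCount l ≤ oddCount l then oddCount l - evenCount l
  else evenCount l - oddCount l - 1

/-- The conjugate partition entry `λ'_j = #{i : λ_i ≥ j}`. -/
def conjPart (l : List ℕ) (j : ℕ) : ℕ :=
  (l.filter fun a => decide (j ≤ a)).length

/-- The hook length of the cell in (0-indexed) row `i` and (1-indexed) column `j`:
`h(i,j) = (λ_i − j) + (λ'_j − i) + 1`. -/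
def hookLen (l : List ℕ) (i : Fin l.length) (j : ℕ) : ℕ :=
  (l.get i - j) + (conjPart l j - ((i : ℕ) + 1)) + 1

/-- The product of all odd hook lengths of the partition. -/
def Hodd (l : List ℕ) : ℕ :=
  ∏ i : Fin l.length, ∏ j ∈ Finset.Icc 1 (l.get i),
    if Odd (hookLen l i j) then hookLen l i j else 1

/-- The product of the hook lengths of the staircase partition `(k,k−1,…,2,1)`:
`H(δ_k) = ∏_{i=1}^{k} (2i−1)^{k+1−i}`. -/
def Hstaircase (k : ℕ) : ℕ :=
  ∏ i ∈ Finset.Icc 1 k, (2 * i - 1) ^ (k + 1 - i)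


open Polynomial in
/-- Vandermonde determinant through falling factorials. -/
theorem wh_det_descFactorial {n : ℕ} (v : Fin n → ℕ) :
    (Matrix.of fun i j : Fin n => ((v i).descFactorial (j : ℕ) : ℚ)).det
      = (Matrix.vandermonde fun i => (v i : ℚ)).det := by
  rw [Matrix.det_eval_matrixOfPolynomials_eq_det_vandermonde (fun i => (v i : ℚ))
      (fun i => descPochhammer ℚ i) (fun i => descPochhammer_natDegree ℚ i)
      (fun i => monic_descPochhammer ℚ i)]
  congr 1
  ext i j
  simp [descPochhammer_eval_eq_descFactorial]

/-- Product of the odd numbers up to `n`. -/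
def whOddF (n : ℕ) : ℕ := ∏ h ∈ Finset.Icc 1 n, if Odd h then h else 1

theorem whOddF_succ (n : ℕ) : whOddF (n + 1) = whOddF n * (if Odd (n + 1) then n + 1 else 1) := by
  unfold whOddF
  rw [Finset.prod_Icc_succ_top (by omega)]

theorem whOddF_even (a : ℕ) : (2 * a).factorial = 2 ^ a * a.factorial * whOddF (2 * a) := by
  induction a with
  | zero => simp [whOddF]
  | succ a ih =>
    have h1 : ¬ Odd (2 * a + 1 + 1) := by simp [Nat.odd_iff]; omega
    have h2 : Odd (2 * a + 1) := ⟨a, rfl⟩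
    rw [show 2 * (a + 1) = 2 * a + 1 + 1 by ring, whOddF_succ, whOddF_succ, if_neg h1, if_pos h2,
      Nat.factorial_succ, Nat.factorial_succ, ih, Nat.factorial_succ]
    ring

theorem whOddF_odd (a : ℕ) :
    (2 * a + 1).factorial = 2 ^ a * a.factorial * whOddF (2 * a + 1) := by
  have h2 : Odd (2 * a + 1) := ⟨a, rfl⟩
  rw [whOddF_succ, if_pos h2, Nat.factorial_succ, whOddF_even]
  ring

theorem whOddF_eps (a ε : ℕ) (hε : ε ≤ 1) :
    (2 * a + ε).factorial = 2 ^ a * a.factorial * whOddF (2 * a + ε) := by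
  interval_cases ε
  · exact whOddF_even a
  · exact whOddF_odd a

open scoped Nat in
theorem wh_two_mul_factorial (m : ℕ) : (2 * m)! = 2 ^ m * m ! * (2 * m - 1)‼ := by
  cases m with
  | zero => simp
  | succ m =>
    rw [← Nat.doubleFactorial_two_mul, show 2 * (m + 1) = (2 * m + 1) + 1 by ring,
      Nat.factorial_eq_mul_doubleFactorial]
    simp

open scoped Nat in
theorem wh_coeff (a r ε : ℕ) (hε : ε ≤ 1) :
    ((Polynomial.hermite (2 * a + ε)).coeff (2 * r + ε) : ℚ) * ((2 * r + ε)! : ℚ)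
      = ((-1) ^ a * whOddF (2 * a + ε)) * (((-1) ^ r * 2 ^ r) * (a.descFactorial r : ℚ)) := by
  rcases lt_or_ge a r with h | h
  · rw [Polynomial.coeff_hermite_of_lt (by omega), Nat.descFactorial_of_lt h]
    simp
  · obtain ⟨m, rfl⟩ := Nat.exists_eq_add_of_le h
    have h1 := Polynomial.coeff_hermite_explicit m (2 * r + ε)
    rw [show 2 * (r + m) + ε = 2 * m + (2 * r + ε) by ring, h1]
    have h2 := Nat.add_choose_mul_factorial_mul_factorial (2 * m) (2 * r + ε)
    have h3 := wh_two_mul_factorial m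
    have h4 := whOddF_eps (r + m) ε hε
    rw [show 2 * (r + m) + ε = 2 * m + (2 * r + ε) by ring] at h4
    have h5 := Nat.factorial_mul_descFactorial h
    rw [Nat.add_sub_cancel_left] at h5
    rw [h3, h4, ← h5] at h2
    have h7 : (2 * m - 1)‼ * Nat.choose (2 * m + (2 * r + ε)) (2 * r + ε) * (2 * r + ε)! =
        whOddF (2 * m + (2 * r + ε)) * (2 ^ r * (r + m).descFactorial r) := by
      have : 0 < 2 ^ m * m ! := by positivity
      apply Nat.eq_of_mul_eq_mul_left this
      rw [pow_add] at h2
      linarith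
    have h8 : ((-1 : ℚ)) ^ (r + m) * (-1) ^ r = (-1) ^ m := by
      rw [← pow_add, show r + m + r = 2 * r + m by ring, pow_add, pow_mul]; simp
    have h9 := congrArg (Nat.cast : ℕ → ℚ) h7
    push_cast at h9 ⊢
    rw [← h8]
    linear_combination ((-1 : ℚ)) ^ (r + m) * (-1) ^ r * h9

theorem wh_block (q ε : ℕ) (hε : ε ≤ 1) (a : Fin q → ℕ) :
    |(Matrix.of fun i r : Fin q =>
        ((Polynomial.hermite (2 * a i + ε)).coeff (2 * (r : ℕ) + ε) : ℚ)).det|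
      * ∏ r : Fin q, ((2 * (r : ℕ) + ε).factorial : ℚ)
    = (∏ i, (whOddF (2 * a i + ε) : ℚ)) *
      |(Matrix.vandermonde fun i => ((2 * a i + ε : ℕ) : ℚ)).det| := by
  set M := (Matrix.of fun i r : Fin q =>
        ((Polynomial.hermite (2 * a i + ε)).coeff (2 * (r : ℕ) + ε) : ℚ)) with hM
  have e1 := Matrix.det_mul_row (fun r : Fin q => ((2 * (r : ℕ) + ε).factorial : ℚ)) M
  have e2 := Matrix.det_mul_row (fun r : Fin q => ((-1) ^ (r : ℕ) * 2 ^ (r : ℕ) : ℚ))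
    (Matrix.of fun i j : Fin q => ((a i).descFactorial (j : ℕ) : ℚ))
  have e3 := Matrix.det_mul_column (fun i : Fin q => ((-1) ^ (a i) * whOddF (2 * a i + ε) : ℚ))
    (Matrix.of fun i r : Fin q => ((-1) ^ (r : ℕ) * 2 ^ (r : ℕ) : ℚ) *
      (Matrix.of fun i j : Fin q => ((a i).descFactorial (j : ℕ) : ℚ)) i r)
  have e4 : (Matrix.of fun i j : Fin q => ((2 * (j : ℕ) + ε).factorial : ℚ) * M i j)
    = (Matrix.of fun i r : Fin q => ((-1) ^ (a i) * whOddF (2 * a i + ε) : ℚ) *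
      (Matrix.of fun i r : Fin q => ((-1) ^ (r : ℕ) * 2 ^ (r : ℕ) : ℚ) *
      (Matrix.of fun i j : Fin q => ((a i).descFactorial (j : ℕ) : ℚ)) i r) i r) := by
    ext i j
    simp only [hM, Matrix.of_apply]
    rw [mul_comm, wh_coeff _ _ _ hε]
  have e5 : (Matrix.vandermonde fun i => ((2 * a i + ε : ℕ) : ℚ)).det
      = (∏ r : Fin q, (2 : ℚ) ^ (r : ℕ)) * (Matrix.vandermonde fun i => (a i : ℚ)).det := by
    rw [← Matrix.det_mul_row]
    push_cast
    rw [Matrix.det_vandermonde_add (fun i => 2 * (a i : ℚ)) (ε : ℚ)]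
    congr 1
    ext i j
    simp [Matrix.vandermonde_apply, mul_pow]
  rw [e4, e3, e2, wh_det_descFactorial] at e1
  have e6 := congrArg abs e1
  rw [e5]
  simp only [abs_mul, Finset.abs_prod, abs_pow, abs_neg, abs_one, one_pow, one_mul,
    Nat.abs_cast, Nat.abs_ofNat] at e6 ⊢
  rw [mul_comm, ← e6]

open Polynomial in
theorem wh_X_mul_deriv (p : ℚ[X]) (i N : ℕ) (hN : p.natDegree < N) :
    X ^ i * derivative^[i] p
      = ∑ e : Fin N, (C (p.coeff e) * X ^ (e : ℕ)) * C (((e : ℕ).descFactorial i : ℕ) : ℚ) := by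
  conv_lhs => rw [p.as_sum_range_C_mul_X_pow' hN]
  rw [iterate_derivative_sum, Finset.mul_sum,
    Fin.sum_univ_eq_sum_range
      (fun e => (C (p.coeff e) * X ^ e) * C ((e.descFactorial i : ℕ) : ℚ)) N]
  refine Finset.sum_congr rfl fun e _ => ?_
  rw [iterate_derivative_C_mul, iterate_derivative_X_pow_eq_C_mul]
  rcases lt_or_ge e i with h | h
  · simp [Nat.descFactorial_of_lt h]
  · obtain ⟨m, rfl⟩ := Nat.exists_eq_add_of_le h
    rw [Nat.add_sub_cancel_left, pow_add]
    ring

open Polynomial in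
theorem wh_wr {L : ℕ} (P : Fin L → ℚ[X]) (N : ℕ) (hN : ∀ j, (P j).natDegree < N) :
    X ^ (∑ i : Fin L, (i : ℕ)) *
      (Matrix.of fun i j : Fin L => derivative^[(i : ℕ)] (P j)).det
    = ∑ f : Fin L → Fin N, C ((∏ j, (P j).coeff (f j)) *
        (Matrix.vandermonde fun j => (((f j : ℕ)) : ℚ)).det) * X ^ (∑ j, (f j : ℕ)) := by
  have h1 := Matrix.det_mul_column (fun i : Fin L => (X : ℚ[X]) ^ (i : ℕ))
    (Matrix.of fun i j : Fin L => derivative^[(i : ℕ)] (P j))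
  rw [← Finset.prod_pow_eq_pow_sum, ← h1, ← Matrix.det_transpose]
  have h2 : (Matrix.of fun i j : Fin L => (X : ℚ[X]) ^ (i : ℕ) *
      (Matrix.of fun i j : Fin L => derivative^[(i : ℕ)] (P j)) i j).transpose
    = fun j => ∑ e : Fin N, fun i : Fin L =>
      (C ((P j).coeff e) * X ^ (e : ℕ)) * C (((e : ℕ).descFactorial i : ℕ) : ℚ) := by
    funext j i
    rw [Finset.sum_apply, ← wh_X_mul_deriv _ _ _ (hN j)]
    rfl
  rw [h2]
  have h3 := (Matrix.detRowAlternating (R := ℚ[X]) (n := Fin L)).toMultilinearMap.map_sum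
    (fun (j : Fin L) (e : Fin N) => fun i : Fin L =>
      (C ((P j).coeff e) * X ^ (e : ℕ)) * C (((e : ℕ).descFactorial i : ℕ) : ℚ))
  refine h3.trans ?_
  refine Finset.sum_congr rfl fun f _ => ?_
  have h4 := Matrix.det_mul_column (fun j : Fin L => (C ((P j).coeff (f j)) * X ^ (f j : ℕ)))
    (Matrix.of fun j i : Fin L => C (((f j : ℕ).descFactorial i : ℕ) : ℚ))
  refine Eq.trans h4 ?_
  rw [Finset.prod_mul_distrib, Finset.prod_pow_eq_pow_sum, ← wh_det_descFactorial, C_mul,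
    RingHom.map_det, map_prod]
  have h5 : (Matrix.of fun j i : Fin L => C (((f j : ℕ).descFactorial i : ℕ) : ℚ))
    = (C : ℚ →+* ℚ[X]).mapMatrix
      (Matrix.of fun i j : Fin L => ((f i : ℕ).descFactorial (j : ℕ) : ℚ)) := by
    ext i j : 1
    simp
  rw [h5]
  ring

theorem wh_minsum (S : Finset ℕ) :
    ∑ x ∈ Finset.range S.card, x ≤ ∑ x ∈ S, x ∧
    (∑ x ∈ Finset.range S.card, x = ∑ x ∈ S, x → S = Finset.range S.card) := by
  set R := Finset.range S.card with hR
  have hc : R.card = S.card := by simp [hR]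
  have h1 : ∑ x ∈ R \ S, x + (R \ S).card ≤ (R \ S).card * S.card := by
    rw [Finset.card_eq_sum_ones, ← Finset.sum_add_distrib, ← Finset.card_eq_sum_ones,
      ← smul_eq_mul]
    refine Finset.sum_le_card_nsmul _ _ _ fun x hx => ?_
    simp [hR] at hx; omega
  have h2 : (S \ R).card * S.card ≤ ∑ x ∈ S \ R, x := by
    rw [← smul_eq_mul]
    refine Finset.card_nsmul_le_sum _ _ _ fun x hx => ?_
    simp [hR] at hx; omega
  have h3 : (S \ R).card = (R \ S).card := by
    rw [Finset.card_sdiff_comm hc.symm]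
  have h4 := Finset.sum_inter_add_sum_sdiff S R (fun x => x)
  have h5 := Finset.sum_inter_add_sum_sdiff R S (fun x => x)
  rw [Finset.inter_comm] at h5
  rw [h3] at h2
  refine ⟨by omega, fun h => ?_⟩
  have h6 : (R \ S).card = 0 := by omega
  have h7 : R ⊆ S := by
    rw [Finset.card_eq_zero] at h6
    exact Finset.sdiff_eq_empty_iff_subset.mp h6
  exact (Finset.eq_of_subset_of_card_le h7 hc.ge).symm

theorem wh_minsum_fin {q : ℕ} (u : Fin q → ℕ) (hu : Function.Injective u) :
    ∑ x : Fin q, (x : ℕ) ≤ ∑ x, u x ∧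
    (∑ x : Fin q, (x : ℕ) = ∑ x, u x → ∀ x, u x < q) := by
  have h := wh_minsum (Finset.univ.image u)
  rw [Finset.card_image_of_injective _ hu, Finset.card_univ, Fintype.card_fin,
    Finset.sum_image (fun _ _ _ _ h => hu h), Finset.sum_range] at h
  refine ⟨h.1, fun hh x => ?_⟩
  have h2 := h.2 hh
  have : u x ∈ Finset.univ.image u := Finset.mem_image_of_mem _ (Finset.mem_univ _)
  rw [h2] at this
  simpa using this

/-- The minimal exponents: evens below `2q`, odds below `2p`. -/
def whE (q p : ℕ) : Fin q ⊕ Fin p → ℕ := Sum.elim (fun r => 2 * (r : ℕ)) (fun s => 2 * (s : ℕ) + 1)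

theorem whE_inj (q p : ℕ) : Function.Injective (whE q p) := by
  rintro (x | x) (y | y) h <;> simp only [whE, Sum.elim_inl, Sum.elim_inr] at h
  · congr 1; ext; omega
  · omega
  · omega
  · congr 1; ext; omega

theorem wh_exists_perm {q p : ℕ} (f : Fin q ⊕ Fin p → ℕ) (hf : Function.Injective f)
    (hpar : ∀ x, (f x + whE q p x) % 2 = 0) (hs : ∑ x, f x = ∑ x, whE q p x) :
    ∃ σ : Equiv.Perm (Fin q ⊕ Fin p), ∀ x, f x = whE q p (σ x) := by
  have hu : ∀ r : Fin q, f (Sum.inl r) = 2 * (f (Sum.inl r) / 2) := fun r => by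
    have := hpar (Sum.inl r); simp only [whE, Sum.elim_inl] at this; omega
  have hw : ∀ r : Fin p, f (Sum.inr r) = 2 * (f (Sum.inr r) / 2) + 1 := fun r => by
    have := hpar (Sum.inr r); simp only [whE, Sum.elim_inr] at this; omega
  have iu : Function.Injective fun r : Fin q => f (Sum.inl r) / 2 := fun x y h => by
    have : f (Sum.inl x) = f (Sum.inl y) := by
      rw [hu x, hu y]; simp only at h; rw [h]
    exact Sum.inl_injective (hf this)
  have iw : Function.Injective fun r : Fin p => f (Sum.inr r) / 2 := fun x y h => by
    have : f (Sum.inr x) = f (Sum.inr y) := by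
      rw [hw x, hw y]; simp only at h; rw [h]
    exact Sum.inr_injective (hf this)
  obtain ⟨a1, a2⟩ := wh_minsum_fin _ iu
  obtain ⟨b1, b2⟩ := wh_minsum_fin _ iw
  rw [Fintype.sum_sum_type, Fintype.sum_sum_type, Finset.sum_congr rfl (fun r _ => hu r),
    Finset.sum_congr rfl (fun r _ => hw r)] at hs
  simp only [whE, Sum.elim_inl, Sum.elim_inr, Finset.sum_add_distrib, ← Finset.mul_sum] at hs
  have a3 := a2 (by omega)
  have b3 := b2 (by omega)
  have key : ∀ x, ∃ y, f x = whE q p y := by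
    rintro (x | x)
    · exact ⟨Sum.inl ⟨_, a3 x⟩, hu x⟩
    · exact ⟨Sum.inr ⟨_, b3 x⟩, hw x⟩
  choose g hg using key
  have gi : Function.Injective g := fun x y h => hf (by rw [hg, hg, h])
  exact ⟨Equiv.ofBijective g (Finite.injective_iff_bijective.mp gi), hg⟩

open Polynomial in
theorem wh_coeff_wr {L q p : ℕ} (φ : Fin q ⊕ Fin p ≃ Fin L) (P : Fin L → ℚ[X])
    (hP : ∀ x t, (t + whE q p x) % 2 ≠ 0 → (P (φ x)).coeff t = 0) (m : ℕ)
    (hm : m + ∑ i : Fin L, (i : ℕ) = ∑ x, whE q p x) :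
    ((Matrix.of fun i j : Fin L => derivative^[(i : ℕ)] (P j)).det).coeff m
      = (Matrix.vandermonde fun j => ((whE q p (φ.symm j) : ℕ) : ℚ)).det *
        (Matrix.of fun j k : Fin L => (P j).coeff (whE q p (φ.symm k))).det := by
  obtain ⟨N, hN, hN2⟩ : ∃ N, (∀ j, (P j).natDegree < N) ∧ ∀ x, whE q p x < N := by
    refine ⟨(∑ j, (P j).natDegree) + (∑ x, whE q p x) + 1, fun j => ?_, fun x => ?_⟩
    · have := Finset.single_le_sum (f := fun j => (P j).natDegree) (fun _ _ => Nat.zero_le _)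
        (Finset.mem_univ j)
      omega
    · have := Finset.single_le_sum (f := whE q p) (fun _ _ => Nat.zero_le _)
        (Finset.mem_univ x)
      omega
  have h1 := congrArg (fun r => coeff r (m + ∑ i : Fin L, (i : ℕ))) (wh_wr P N hN)
  simp only [coeff_X_pow_mul, finsetSum_coeff, coeff_C_mul, coeff_X_pow] at h1
  rw [h1, Matrix.det_apply' (Matrix.of fun j k : Fin L => (P j).coeff (whE q p (φ.symm k))),
    Finset.mul_sum, hm]
  symm
  refine Finset.sum_of_injOn
    (fun (σ : Equiv.Perm (Fin L)) (j : Fin L) => (⟨whE q p (φ.symm (σ⁻¹ j)), hN2 _⟩ : Fin N))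
    ?_ ?_ ?_ ?_
  · intro σ _ τ _ h
    have : σ⁻¹ = τ⁻¹ := by
      ext j
      have := congrFun h j
      simp only [Fin.mk.injEq] at this
      rw [φ.symm.injective (whE_inj _ _ this)]
    exact inv_injective this
  · intro σ _; simp
  · intro f _ hf
    by_contra hne
    apply hf
    have hs : ∑ x, whE q p x = ∑ j, (f j : ℕ) := by
      by_contra h
      rw [if_neg h] at hne
      simp at hne
    have hprod : ∀ j, (P j).coeff (f j) ≠ 0 := by
      intro j h
      rw [Finset.prod_eq_zero (Finset.mem_univ j) h] at hne
      simp at hne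
    have hv : (Matrix.vandermonde fun j => (((f j : ℕ)) : ℚ)).det ≠ 0 := by
      intro h
      rw [h] at hne
      simp at hne
    rw [Matrix.det_vandermonde_ne_zero_iff] at hv
    obtain ⟨σ, hσ⟩ := wh_exists_perm (fun x => (f (φ x) : ℕ))
      (fun x y h => φ.injective (hv (by simp only at h ⊢; rw [h])))
      (fun x => by
        by_contra h
        exact hprod _ (hP x _ h))
      (by
        rw [hs]
        exact Equiv.sum_comp φ (fun j => (f j : ℕ)))
    refine ⟨(φ.symm.trans (σ.trans φ))⁻¹, by simp, ?_⟩
    funext j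
    apply Fin.ext
    have := hσ (φ.symm j)
    simp only [Equiv.apply_symm_apply] at this
    simp [this]
  · intro σ _
    simp only
    have e1 : ∑ x, whE q p x = ∑ j, whE q p (φ.symm (σ⁻¹ j)) := by
      rw [Equiv.sum_comp σ⁻¹ (fun j => whE q p (φ.symm j)), Equiv.sum_comp φ.symm (whE q p)]
    rw [if_pos e1, mul_one]
    have e2 := Matrix.det_permute σ⁻¹ (Matrix.vandermonde fun j => ((whE q p (φ.symm j) : ℕ) : ℚ))
    have e3 : (Matrix.vandermonde fun j => ((whE q p (φ.symm j) : ℕ) : ℚ)).submatrix (⇑σ⁻¹) id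
      = Matrix.vandermonde fun j => ((whE q p (φ.symm (σ⁻¹ j)) : ℕ) : ℚ) := by
      ext i j; simp [Matrix.vandermonde_apply]
    rw [e3] at e2
    rw [e2]
    have e4 : ∏ i, (Matrix.of fun j k : Fin L => (P j).coeff (whE q p (φ.symm k))) (σ i) i
      = ∏ j, (P j).coeff (whE q p (φ.symm (σ⁻¹ j))) := by
      rw [← Equiv.prod_comp σ (fun j => (P j).coeff (whE q p (φ.symm (σ⁻¹ j))))]
      simp
    rw [e4]
    simp only [Equiv.Perm.sign_inv]
    ring

/-- Symmetric squared Vandermonde. -/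
noncomputable def whD {α : Type*} [Fintype α] [DecidableEq α] (v : α → ℚ) : ℚ :=
  ∏ x, ∏ y, if x = y then 1 else |v x - v y|

theorem whD_eq {n : ℕ} (v : Fin n → ℚ) : |(Matrix.vandermonde v).det| ^ 2 = whD v := by
  have h : |(Matrix.vandermonde v).det| = ∏ i, ∏ j, if i < j then |v i - v j| else 1 := by
    rw [Matrix.det_vandermonde, Finset.abs_prod]
    refine Finset.prod_congr rfl fun i _ => ?_
    rw [Finset.abs_prod, ← Finset.prod_filter]
    refine Finset.prod_congr (by ext; simp) fun j _ => abs_sub_comm _ _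
  have h2 : |(Matrix.vandermonde v).det| = ∏ i, ∏ j, if j < i then |v i - v j| else 1 := by
    rw [h, Finset.prod_comm]
    refine Finset.prod_congr rfl fun i _ => Finset.prod_congr rfl fun j _ => ?_
    rw [abs_sub_comm]
  rw [sq]
  nth_rewrite 1 [h]
  rw [h2, ← Finset.prod_mul_distrib, whD]
  refine Finset.prod_congr rfl fun i _ => ?_
  rw [← Finset.prod_mul_distrib]
  refine Finset.prod_congr rfl fun j _ => ?_
  rcases lt_trichotomy i j with hij | hij | hij
  · rw [if_pos hij, if_neg hij.not_gt, if_neg hij.ne, mul_one]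
  · subst hij; simp
  · rw [if_pos hij, if_neg hij.not_gt, if_neg hij.ne', one_mul]

theorem wh_vdm_split {L q p : ℕ} (φ : Fin q ⊕ Fin p ≃ Fin L) (u : Fin q → ℚ) (w : Fin p → ℚ)
    (v : Fin L → ℚ) (hu : ∀ r, v (φ (Sum.inl r)) = u r) (hw : ∀ r, v (φ (Sum.inr r)) = w r) :
    |(Matrix.vandermonde v).det| = |(Matrix.vandermonde u).det| * |(Matrix.vandermonde w).det| *
      ∏ r, ∏ s, |u r - w s| := by
  rw [← sq_eq_sq₀ (abs_nonneg _)
    (mul_nonneg (by positivity) (Finset.prod_nonneg fun _ _ => Finset.prod_nonneg fun _ _ => abs_nonneg _)),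
    mul_pow, mul_pow, whD_eq, whD_eq, whD_eq]
  have h1 : whD v = whD (v ∘ φ) := by
    unfold whD
    rw [← Equiv.prod_comp φ]
    refine Finset.prod_congr rfl fun i _ => ?_
    rw [← Equiv.prod_comp φ]
    simp
  rw [h1]
  unfold whD
  simp only [Fintype.prod_sum_type, Function.comp, hu, hw, Sum.inl.injEq, Sum.inr.injEq,
    reduceCtorEq, if_false, Finset.prod_mul_distrib]
  have h2 : ∏ x : Fin p, ∏ y : Fin q, |w x - u y| = ∏ r, ∏ s, |u r - w s| := by
    rw [Finset.prod_comm]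
    refine Finset.prod_congr rfl fun i _ => Finset.prod_congr rfl fun j _ => ?_
    rw [abs_sub_comm]
  rw [h2]
  ring

theorem wh_det_blocks {L q p : ℕ} (φ : Fin q ⊕ Fin p ≃ Fin L) (M : Matrix (Fin L) (Fin L) ℚ)
    (h1 : ∀ r s, M (φ (Sum.inl r)) (φ (Sum.inr s)) = 0)
    (h2 : ∀ r s, M (φ (Sum.inr r)) (φ (Sum.inl s)) = 0) :
    M.det = (Matrix.of fun r s : Fin q => M (φ (Sum.inl r)) (φ (Sum.inl s))).det *
      (Matrix.of fun r s : Fin p => M (φ (Sum.inr r)) (φ (Sum.inr s))).det := by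
  rw [← Matrix.det_submatrix_equiv_self φ, ← Matrix.det_fromBlocks_zero₁₂ _ 0]
  congr 1
  ext (i | i) (j | j) <;> simp [h1, h2]

theorem wh_conj (l : List ℕ) (hl : l.Pairwise (· ≥ ·)) (j : ℕ) :
    ∀ t (h : t < l.length), t < conjPart l j ↔ j ≤ l[t] := by
  induction l with
  | nil => intro t h; simp at h
  | cons a l ih =>
    rw [List.pairwise_cons] at hl
    have ih' := ih hl.2
    intro t h
    by_cases ha : j ≤ a
    · have hc : conjPart (a :: l) j = conjPart l j + 1 := by
        simp [conjPart, ha]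
      rw [hc]
      cases t with
      | zero => simp [ha]
      | succ t =>
        have := ih' t (by simpa using h)
        simp only [List.getElem_cons_succ]
        rw [← this]; omega
    · have hc : conjPart (a :: l) j = 0 := by
        simp only [conjPart, List.length_eq_zero_iff, List.filter_eq_nil_iff, decide_eq_true_eq]
        intro x hx
        rcases List.mem_cons.mp hx with rfl | hx
        · exact ha
        · have := hl.1 x hx; omega
      rw [hc]
      have : (a :: l)[t] ≤ a := by
        rcases List.mem_cons.mp (List.getElem_mem h) with h' | h'
        · exact h'.le
        · exact hl.1 _ h'
      constructor
      · intro h; omega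
      · intro h; omega

theorem wh_conj_le (l : List ℕ) (j : ℕ) : conjPart l j ≤ l.length := List.length_filter_le _ _

theorem wh_get_anti (l : List ℕ) (hl : l.Pairwise (· ≥ ·)) {i t : Fin l.length} (h : i < t) :
    l.get t ≤ l.get i := List.pairwise_iff_get.mp hl i t h

theorem wh_deg_anti (l : List ℕ) (hl : l.Pairwise (· ≥ ·)) {i t : Fin l.length} (h : i < t) :
    degVec l t < degVec l i := by
  have h1 := wh_get_anti l hl h
  have h2 : (i : ℕ) < t := h
  have h3 := t.isLt
  unfold degVec
  omega

theorem wh_row (l : List ℕ) (hl : IsPartition l) (i : Fin l.length) (g : ℕ → ℕ) :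
    (∏ j ∈ Finset.Icc 1 (l.get i), g (hookLen l i j)) *
      ∏ t ∈ Finset.Ioi i, g (degVec l i - degVec l t)
      = ∏ h ∈ Finset.Icc 1 (degVec l i), g h := by
  obtain ⟨hp, -⟩ := hl
  have hcj : ∀ j (t : Fin l.length), (t : ℕ) < conjPart l j ↔ j ≤ l.get t :=
    fun j t => wh_conj l hp j t t.isLt
  -- conjPart antitone
  have hmono : ∀ j j', j ≤ j' → conjPart l j' ≤ conjPart l j := by
    intro j j' hjj
    by_contra h
    have hlt : conjPart l j < l.length := by have := wh_conj_le l j'; omega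
    have h1 := hcj j ⟨_, hlt⟩
    have h2 := hcj j' ⟨_, hlt⟩
    simp only at h1 h2
    omega
  have inj1 : Set.InjOn (hookLen l i) (Finset.Icc 1 (l.get i) : Set ℕ) := by
    intro j hj j' hj' h
    simp only [Finset.coe_Icc, Set.mem_Icc] at hj hj'
    have h1 := (hcj j i).mpr hj.2
    have h2 := (hcj j' i).mpr hj'.2
    unfold hookLen at h
    rcases lt_trichotomy j j' with hlt | rfl | hlt
    · have := hmono j j' hlt.le; omega
    · rfl
    · have := hmono j' j hlt.le; omega
  have inj2 : Set.InjOn (fun t => degVec l i - degVec l t) (Finset.Ioi i : Set (Fin l.length)) := by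
    intro t ht t' ht' h
    simp only [Finset.coe_Ioi, Set.mem_Ioi] at ht ht' h
    have h1 := wh_deg_anti l hp ht
    have h2 := wh_deg_anti l hp ht'
    rcases lt_trichotomy t t' with hlt | rfl | hlt
    · have := wh_deg_anti l hp hlt; omega
    · rfl
    · have := wh_deg_anti l hp hlt; omega
  rw [← Finset.prod_image (f := g) inj1, ← Finset.prod_image (f := g) inj2]
  have hdisj : Disjoint ((Finset.Icc 1 (l.get i)).image (hookLen l i))
      ((Finset.Ioi i).image fun t => degVec l i - degVec l t) := by
    rw [Finset.disjoint_left]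
    intro x hx hx'
    obtain ⟨j, hj, rfl⟩ := Finset.mem_image.mp hx
    obtain ⟨t, ht, h⟩ := Finset.mem_image.mp hx'
    rw [Finset.mem_Icc] at hj
    rw [Finset.mem_Ioi] at ht
    have h1 := (hcj j i).mpr hj.2
    have h2 := hcj j t
    have h3 := wh_get_anti l hp ht
    have h4 : (i : ℕ) < t := ht
    have h5 := t.isLt
    unfold hookLen degVec at h
    by_cases hc : j ≤ l.get t
    · have := h2.mpr hc
      omega
    · have : ¬ ((t : ℕ) < conjPart l j) := fun h => hc (h2.mp h)
      omega
  rw [← Finset.prod_union hdisj]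
  congr 1
  apply Finset.eq_of_subset_of_card_le
  · intro x hx
    rw [Finset.mem_Icc]
    rcases Finset.mem_union.mp hx with hx | hx
    · obtain ⟨j, hj, rfl⟩ := Finset.mem_image.mp hx
      rw [Finset.mem_Icc] at hj
      have := wh_conj_le l j
      have := i.isLt
      unfold hookLen degVec
      omega
    · obtain ⟨t, ht, rfl⟩ := Finset.mem_image.mp hx
      rw [Finset.mem_Ioi] at ht
      have := wh_deg_anti l hp ht
      omega
  · rw [Finset.card_union_of_disjoint hdisj, Finset.card_image_of_injOn inj1,
      Finset.card_image_of_injOn inj2]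
    have := i.isLt
    simp [degVec]

theorem wh_Hodd (l : List ℕ) (hl : IsPartition l) :
    Hodd l * ∏ i : Fin l.length, ∏ t ∈ Finset.Ioi i,
      (if Odd (degVec l i - degVec l t) then degVec l i - degVec l t else 1)
      = ∏ i : Fin l.length, whOddF (degVec l i) := by
  unfold Hodd
  rw [← Finset.prod_mul_distrib]
  exact Finset.prod_congr rfl fun i _ => wh_row l hl i (fun h => if Odd h then h else 1)

theorem wh_sym_sq {n : ℕ} (G : Fin n → Fin n → ℚ) (hs : ∀ i j, G i j = G j i)
    (hd : ∀ i, G i i = 1) : (∏ i, ∏ t ∈ Finset.Ioi i, G i t) ^ 2 = ∏ i, ∏ t, G i t := by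
  have h : ∏ i, ∏ t ∈ Finset.Ioi i, G i t = ∏ i, ∏ j, if i < j then G i j else 1 := by
    refine Finset.prod_congr rfl fun i _ => ?_
    rw [← Finset.prod_filter]
    refine Finset.prod_congr (by ext; simp) fun j _ => rfl
  have h2 : ∏ i, ∏ t ∈ Finset.Ioi i, G i t = ∏ i, ∏ j, if j < i then G i j else 1 := by
    rw [h, Finset.prod_comm]
    refine Finset.prod_congr rfl fun i _ => Finset.prod_congr rfl fun j _ => ?_
    rw [hs]
  rw [sq]
  nth_rewrite 1 [h]
  rw [h2, ← Finset.prod_mul_distrib]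
  refine Finset.prod_congr rfl fun i _ => ?_
  rw [← Finset.prod_mul_distrib]
  refine Finset.prod_congr rfl fun j _ => ?_
  rcases lt_trichotomy i j with hij | hij | hij
  · rw [if_pos hij, if_neg hij.not_gt, mul_one]
  · subst hij; simp [hd]
  · rw [if_pos hij, if_neg hij.not_gt, one_mul]

theorem wh_cross (l : List ℕ) (hl : IsPartition l) {q p : ℕ}
    (φ : Fin q ⊕ Fin p ≃ Fin l.length) (a : Fin q → ℕ) (b : Fin p → ℕ)
    (ha : ∀ r, degVec l (φ (Sum.inl r)) = 2 * a r)
    (hb : ∀ r, degVec l (φ (Sum.inr r)) = 2 * b r + 1) :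
    ((∏ i : Fin l.length, ∏ t ∈ Finset.Ioi i,
      (if Odd (degVec l i - degVec l t) then degVec l i - degVec l t else 1) : ℕ) : ℚ)
      = ∏ r, ∏ s, |((2 * a r + 0 : ℕ) : ℚ) - ((2 * b s + 1 : ℕ) : ℚ)| := by
  let G : Fin l.length → Fin l.length → ℚ := fun i t =>
    if Odd (degVec l i + degVec l t) then |(degVec l i : ℚ) - (degVec l t : ℚ)| else 1
  have h1 : ((∏ i : Fin l.length, ∏ t ∈ Finset.Ioi i,
      (if Odd (degVec l i - degVec l t) then degVec l i - degVec l t else 1) : ℕ) : ℚ)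
      = ∏ i, ∏ t ∈ Finset.Ioi i, G i t := by
    push_cast
    refine Finset.prod_congr rfl fun i _ => Finset.prod_congr rfl fun t ht => ?_
    rw [Finset.mem_Ioi] at ht
    have h := wh_deg_anti l hl.1 ht
    have e : Odd (degVec l i - degVec l t) ↔ Odd (degVec l i + degVec l t) := by
      rw [Nat.odd_iff, Nat.odd_iff]; omega
    simp only [G, e]
    split_ifs
    · have : (degVec l t : ℚ) < degVec l i := by exact_mod_cast h
      rw [Nat.cast_sub h.le, abs_of_pos (by linarith)]
    · rfl
  rw [h1, ← sq_eq_sq₀ (Finset.prod_nonneg fun _ _ => Finset.prod_nonneg fun _ _ => by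
      simp only [G]; split_ifs <;> positivity)
    (Finset.prod_nonneg fun _ _ => Finset.prod_nonneg fun _ _ => abs_nonneg _),
    wh_sym_sq G (fun i j => by simp only [G]; rw [add_comm, abs_sub_comm])
      (fun i => by simp [G])]
  rw [← Equiv.prod_comp φ]
  have h2 : ∀ x, ∏ t, G x t = ∏ y, G x (φ y) := fun x => (Equiv.prod_comp φ _).symm
  simp only [h2, Fintype.prod_sum_type, Finset.prod_mul_distrib]
  have g1 : ∀ r s, G (φ (Sum.inl r)) (φ (Sum.inl s)) = 1 := fun r s => by
    simp only [G, ha]; rw [if_neg]; rw [Nat.odd_iff]; omega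
  have g2 : ∀ r s, G (φ (Sum.inr r)) (φ (Sum.inr s)) = 1 := fun r s => by
    simp only [G, hb]; rw [if_neg]; rw [Nat.odd_iff]; omega
  have g3 : ∀ r s, G (φ (Sum.inl r)) (φ (Sum.inr s))
      = |((2 * a r + 0 : ℕ) : ℚ) - ((2 * b s + 1 : ℕ) : ℚ)| := fun r s => by
    simp only [G, ha, hb]; rw [if_pos]; · rfl
    rw [Nat.odd_iff]; omega
  have g4 : ∀ s r, G (φ (Sum.inr s)) (φ (Sum.inl r))
      = |((2 * a r + 0 : ℕ) : ℚ) - ((2 * b s + 1 : ℕ) : ℚ)| := fun s r => by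
    simp only [G, ha, hb]; rw [if_pos, abs_sub_comm]; · rfl
    rw [Nat.odd_iff]; omega
  simp only [g1, g2, g3, g4, Finset.prod_const_one, one_mul, mul_one]
  rw [Finset.prod_comm (f := fun s r => |((2 * a r + 0 : ℕ) : ℚ) - ((2 * b s + 1 : ℕ) : ℚ)|), sq]

/-- `|2r - (2s+1)|` as a natural number. -/
def whd (r s : ℕ) : ℕ := if s < r then 2 * r - 2 * s - 1 else 2 * s + 1 - 2 * r

theorem whd_succ (r s : ℕ) : whd (r + 1) (s + 1) = whd r s := by
  unfold whd; split_ifs <;> omega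

theorem whd_cast (r s : ℕ) : ((whd r s : ℕ) : ℚ) = |((2 * r + 0 : ℕ) : ℚ) - ((2 * s + 1 : ℕ) : ℚ)| := by
  unfold whd
  split_ifs with h
  · have : (2 * s + 1 : ℕ) ≤ 2 * r + 0 := by omega
    rw [← Nat.cast_sub this, Nat.abs_cast]
    congr 1
  · have : 2 * r + 0 ≤ (2 * s + 1 : ℕ) := by omega
    rw [abs_sub_comm, ← Nat.cast_sub this, Nat.abs_cast]
    congr 1

theorem whOddF_two (q : ℕ) : whOddF (2 * (q + 1)) = whOddF (2 * q) * (2 * q + 1) := by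
  have h1 : ¬ Odd (2 * q + 1 + 1) := by simp [Nat.odd_iff]; omega
  have h2 : Odd (2 * q + 1) := ⟨q, rfl⟩
  rw [show 2 * (q + 1) = 2 * q + 1 + 1 by ring, whOddF_succ, whOddF_succ, if_neg h1, if_pos h2,
    mul_one]

theorem whOddF_two' (q : ℕ) : whOddF (2 * (q + 1)) = whOddF (2 * q + 1) := by
  have h1 : ¬ Odd (2 * q + 1 + 1) := by simp [Nat.odd_iff]; omega
  rw [show 2 * (q + 1) = 2 * q + 1 + 1 by ring, whOddF_succ, if_neg h1, mul_one]

theorem whOddF_prod (p : ℕ) : ∏ s ∈ Finset.range (p + 1), (2 * s + 1) = whOddF (2 * p + 1) := by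
  rw [← whOddF_two']
  induction p with
  | zero => simp [whOddF]; decide
  | succ p ih => rw [Finset.prod_range_succ, ih, whOddF_two (p + 1)]

theorem wh_step (q p : ℕ) : (∏ s ∈ Finset.range (p + 1), whd q s) * ∏ r ∈ Finset.range q, whd r p
    = whOddF (2 * q) * whOddF (2 * p + 1) := by
  induction q generalizing p with
  | zero =>
    have : ∀ s, whd 0 s = 2 * s + 1 := fun s => by simp [whd]
    simp only [this, whOddF_prod]
    simp [whOddF]
  | succ q ih =>
    cases p with
    | zero =>
      have h0 : ∏ r ∈ Finset.range (q + 1), whd r 0 = whOddF (2 * q) := by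
        rw [Finset.prod_range_succ']
        cases q with
        | zero => simp [whd, whOddF]
        | succ q =>
          rw [whOddF_two', ← whOddF_prod]
          simp only [whd]
          simp
          refine Finset.prod_congr rfl fun i _ => by omega
      rw [h0, whOddF_two]
      simp [whd, whOddF]
      rw [show 2 * (q + 1) - 1 = 2 * q + 1 by omega]
      ring
    | succ p =>
      rw [Finset.prod_range_succ' _ (p + 1), Finset.prod_range_succ' _ q]
      simp only [whd_succ]
      have h1 : whd (q + 1) 0 = 2 * q + 1 := by simp [whd]; omega
      have h2 : whd 0 (p + 1) = 2 * (p + 1) + 1 := by simp [whd]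
      have h3 : whOddF (2 * (p + 1) + 1) = whOddF (2 * p + 1) * (2 * (p + 1) + 1) := by
        rw [whOddF_succ, whOddF_two', if_pos ⟨p + 1, rfl⟩]
      rw [h1, h2, h3, whOddF_two]
      linear_combination (2 * q + 1) * (2 * (p + 1) + 1) * ih p

theorem wh_Hst (k : ℕ) : Hstaircase k = ∏ s ∈ Finset.range k, whOddF (2 * s + 1) := by
  induction k with
  | zero => simp [Hstaircase]
  | succ k ih =>
    rw [Finset.prod_range_succ, ← ih, ← whOddF_prod]
    have h1 : ∏ s ∈ Finset.range (k + 1), (2 * s + 1) = ∏ i ∈ Finset.Icc 1 (k + 1), (2 * i - 1) := by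
      rw [← Finset.Ico_add_one_right_eq_Icc, Finset.prod_Ico_eq_prod_range]
      refine Finset.prod_congr rfl fun i _ => by omega
    rw [h1]
    unfold Hstaircase
    have h2 : ∏ i ∈ Finset.Icc 1 k, (2 * i - 1) ^ (k + 1 - i)
      = ∏ i ∈ Finset.Icc 1 (k + 1), (2 * i - 1) ^ (k + 1 - i) := by
      rw [Finset.prod_Icc_succ_top (by omega)]; simp
    rw [h2, ← Finset.prod_mul_distrib]
    refine Finset.prod_congr rfl fun i hi => ?_
    rw [Finset.mem_Icc] at hi
    rw [← pow_succ]
    congr 1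
    omega

/-- `k` as a function of `q` and `p`. -/
def whK (q p : ℕ) : ℕ := if q ≤ p then p - q else q - p - 1

theorem wh_stair (q p : ℕ) :
    (∏ r ∈ Finset.range q, ∏ s ∈ Finset.range p, whd r s) * Hstaircase (whK q p)
      = (∏ r ∈ Finset.range q, whOddF (2 * r)) * ∏ s ∈ Finset.range p, whOddF (2 * s + 1) := by
  induction q generalizing p with
  | zero => simp [whK, wh_Hst]
  | succ q ih =>
    cases p with
    | zero =>
      simp only [whK, wh_Hst, Finset.prod_range_succ' _ q, whOddF_two']
      simp [whOddF]
    | succ p =>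
      have hk : whK (q + 1) (p + 1) = whK q p := by
        unfold whK; split_ifs <;> omega
      have h1 : ∏ r ∈ Finset.range (q + 1), ∏ s ∈ Finset.range (p + 1), whd r s
        = (∏ r ∈ Finset.range q, ∏ s ∈ Finset.range p, whd r s) *
          ((∏ s ∈ Finset.range (p + 1), whd q s) * ∏ r ∈ Finset.range q, whd r p) := by
        rw [Finset.prod_range_succ]
        simp only [Finset.prod_range_succ _ p, Finset.prod_mul_distrib]
        ring
      rw [hk, h1, wh_step, Finset.prod_range_succ, Finset.prod_range_succ]
      linear_combination whOddF (2 * q) * whOddF (2 * p + 1) * ih p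

theorem wh_block_id (q ε : ℕ) (hε : ε ≤ 1) :
    ∏ r : Fin q, ((2 * (r : ℕ) + ε).factorial : ℚ)
    = (∏ i : Fin q, (whOddF (2 * (i : ℕ) + ε) : ℚ)) *
      |(Matrix.vandermonde fun i : Fin q => ((2 * (i : ℕ) + ε : ℕ) : ℚ)).det| := by
  rw [← wh_block q ε hε (fun i => (i : ℕ)), Matrix.det_of_isLowerTriangular]
  · simp
  · intro i j hij
    have : (i : ℕ) < j := hij
    simp only [Matrix.of_apply]
    rw [Polynomial.coeff_hermite_of_lt (by omega)]
    simp

theorem wh_vdmE {L : ℕ} (q p : ℕ) (φ : Fin q ⊕ Fin p ≃ Fin L) :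
    |(Matrix.vandermonde fun j => ((whE q p (φ.symm j) : ℕ) : ℚ)).det| * Hstaircase (whK q p)
    = (∏ r : Fin q, ((2 * (r : ℕ) + 0).factorial : ℚ)) *
      ∏ r : Fin p, ((2 * (r : ℕ) + 1).factorial : ℚ) := by
  rw [wh_vdm_split φ (fun r => ((2 * (r : ℕ) + 0 : ℕ) : ℚ)) (fun r => ((2 * (r : ℕ) + 1 : ℕ) : ℚ)) _
    (fun r => by simp [whE]) (fun r => by simp [whE]), wh_block_id q 0 (by omega),
    wh_block_id p 1 le_rfl]
  have h := congrArg (Nat.cast : ℕ → ℚ) (wh_stair q p)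
  simp only [Finset.prod_range] at h
  simp only [Nat.cast_mul, Nat.cast_prod, whd_cast] at h
  simp only [add_zero] at h ⊢
  linear_combination |(Matrix.vandermonde fun i : Fin q => ((2 * (i : ℕ) : ℕ) : ℚ)).det| *
    |(Matrix.vandermonde fun i : Fin p => ((2 * (i : ℕ) + 1 : ℕ) : ℚ)).det| * h

theorem wh_sum_fin (n : ℕ) : 2 * (∑ i : Fin n, (i : ℕ)) + n = n * n := by
  rw [← Finset.sum_range (fun i => i)]
  induction n with
  | zero => simp
  | succ n ih => rw [Finset.sum_range_succ]; linarith

theorem wh_m (q p L : ℕ) (hL : L = q + p) :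
    whK q p * (whK q p + 1) / 2 + ∑ i : Fin L, (i : ℕ) = ∑ x, whE q p x := by
  subst hL
  have h1 := wh_sum_fin (q + p)
  have h2 := wh_sum_fin q
  have h3 := wh_sum_fin p
  have h4 : 2 * (whK q p * (whK q p + 1) / 2) = whK q p * (whK q p + 1) :=
    Nat.mul_div_cancel' (Nat.even_mul_succ_self _).two_dvd
  rw [Fintype.sum_sum_type]
  simp only [whE, Sum.elim_inl, Sum.elim_inr, Finset.sum_add_distrib, ← Finset.mul_sum,
    Finset.sum_const, Finset.card_univ, Fintype.card_fin, smul_eq_mul, mul_one]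
  generalize whK q p * (whK q p + 1) / 2 = A at *
  generalize ∑ i : Fin (q + p), (i : ℕ) = B at *
  generalize ∑ i : Fin q, (i : ℕ) = C at *
  generalize ∑ i : Fin p, (i : ℕ) = D at *
  unfold whK at h4
  split_ifs at h4 with h
  · obtain ⟨k, rfl⟩ := Nat.exists_eq_add_of_le h
    rw [Nat.add_sub_cancel_left] at h4
    nlinarith
  · obtain ⟨k, rfl⟩ := Nat.exists_eq_add_of_le (show p + 1 ≤ q by omega)
    rw [show p + 1 + k - p - 1 = k by omega] at h4
    nlinarith

theorem wh_exists_equiv (l : List ℕ) :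
    ∃ φ : Fin (evenCount l) ⊕ Fin (oddCount l) ≃ Fin l.length,
      (∀ r, Even (degVec l (φ (Sum.inl r)))) ∧ ∀ r, ¬ Even (degVec l (φ (Sum.inr r))) := by
  have c1 : Fintype.card {i : Fin l.length // Even (degVec l i)} = evenCount l := by
    rw [Fintype.card_subtype]; rfl
  have c2 : Fintype.card {i : Fin l.length // ¬ Even (degVec l i)} = oddCount l := by
    rw [Fintype.card_subtype]; simp only [Nat.not_even_iff_odd]; rfl
  refine ⟨(Equiv.sumCongr (Fintype.equivFinOfCardEq c1).symm
    (Fintype.equivFinOfCardEq c2).symm).trans (Equiv.sumCompl _), fun r => ?_, fun r => ?_⟩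
  · exact ((Fintype.equivFinOfCardEq c1).symm r).2
  · exact ((Fintype.equivFinOfCardEq c2).symm r).2

theorem wh_vander (l : List ℕ) :
    vanderQ l = (Matrix.vandermonde fun i => (degVec l i : ℚ)).det := by
  rw [Matrix.det_vandermonde, vanderQ]
  refine Finset.prod_congr rfl fun i _ => ?_
  rw [← Finset.prod_filter]
  exact Finset.prod_congr (by ext; simp) fun j _ => rfl

theorem wh_main (l : List ℕ) (hl : IsPartition l) :
    |(HeW l).coeff (coreK l * (coreK l + 1) / 2)| * (Hstaircase (coreK l) : ℚ)
      = (Hodd l : ℚ) := by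
  obtain ⟨φ, hev, hod⟩ := wh_exists_equiv l
  have hk : coreK l = whK (evenCount l) (oddCount l) := rfl
  rw [hk]
  generalize evenCount l = q at *
  generalize oddCount l = p at *
  have hL : l.length = q + p := by
    have := Fintype.card_congr φ
    simpa using this.symm
  have ha : ∀ r, ∃ a, degVec l (φ (Sum.inl r)) = 2 * a := fun r => by
    have := hev r; rw [Nat.even_iff] at this; exact ⟨degVec l (φ (Sum.inl r)) / 2, by omega⟩
  have hb : ∀ r, ∃ a, degVec l (φ (Sum.inr r)) = 2 * a + 1 := fun r => by
    have := hod r; rw [Nat.even_iff] at this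
    exact ⟨degVec l (φ (Sum.inr r)) / 2, by omega⟩
  choose a ha using ha
  choose b hb using hb
  set P : Fin l.length → Polynomial ℚ :=
    fun j => (Polynomial.hermite (degVec l j)).map (Int.castRingHom ℚ) with hPdef
  have hP : ∀ x t, (t + whE q p x) % 2 ≠ 0 → (P (φ x)).coeff t = 0 := by
    intro x t ht
    simp only [hPdef, Polynomial.coeff_map]
    rw [Polynomial.coeff_hermite_of_odd_add, map_zero]
    rw [Nat.odd_iff]
    rcases x with r | r
    · rw [ha]; simp only [whE, Sum.elim_inl] at ht; omega
    · rw [hb]; simp only [whE, Sum.elim_inr] at ht; omega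
  have h1 := wh_coeff_wr φ P hP _ (wh_m q p _ hL)
  have h2 := wh_det_blocks φ
    (Matrix.of fun j k : Fin l.length => (P j).coeff (whE q p (φ.symm k)))
    (fun r s => by
      simp only [Matrix.of_apply, Equiv.symm_apply_apply]
      apply hP; simp only [whE, Sum.elim_inl, Sum.elim_inr]; omega)
    (fun r s => by
      simp only [Matrix.of_apply, Equiv.symm_apply_apply]
      apply hP; simp only [whE, Sum.elim_inl, Sum.elim_inr]; omega)
  have b1 := wh_block q 0 (by omega) a
  have b2 := wh_block p 1 le_rfl b
  have m1 : (Matrix.of fun r s : Fin q => (Matrix.of fun j k : Fin l.length =>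
      (P j).coeff (whE q p (φ.symm k))) (φ (Sum.inl r)) (φ (Sum.inl s)))
    = (Matrix.of fun i r : Fin q =>
        ((Polynomial.hermite (2 * a i + 0)).coeff (2 * (r : ℕ) + 0) : ℚ)) := by
    ext i j
    simp [hPdef, ha, whE]
  have m2 : (Matrix.of fun r s : Fin p => (Matrix.of fun j k : Fin l.length =>
      (P j).coeff (whE q p (φ.symm k))) (φ (Sum.inr r)) (φ (Sum.inr s)))
    = (Matrix.of fun i r : Fin p =>
        ((Polynomial.hermite (2 * b i + 1)).coeff (2 * (r : ℕ) + 1) : ℚ)) := by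
    ext i j
    simp [hPdef, hb, whE]
  rw [m1, m2] at h2
  rw [h2] at h1
  have hV := wh_vdm_split φ (fun r => ((2 * a r + 0 : ℕ) : ℚ)) (fun r => ((2 * b r + 1 : ℕ) : ℚ))
    (fun i => (degVec l i : ℚ)) (fun r => by rw [ha]; rfl) (fun r => by rw [hb])
  have hX := wh_cross l hl φ a b ha hb
  have hH := congrArg (Nat.cast : ℕ → ℚ) (wh_Hodd l hl)
  rw [Nat.cast_mul, hX] at hH
  have hO : ((∏ i : Fin l.length, whOddF (degVec l i) : ℕ) : ℚ)
    = (∏ i, (whOddF (2 * a i + 0) : ℚ)) * ∏ i, (whOddF (2 * b i + 1) : ℚ) := by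
    rw [← Equiv.prod_comp φ, Fintype.prod_sum_type]
    simp [ha, hb]
  rw [hO] at hH
  have hE := wh_vdmE q p φ
  have hdet : (Matrix.vandermonde fun i => (degVec l i : ℚ)).det ≠ 0 := by
    rw [Matrix.det_vandermonde_ne_zero_iff]
    intro i j h
    have h' : degVec l i = degVec l j := by
      simp only at h
      exact_mod_cast h
    rcases lt_trichotomy i j with hij | hij | hij
    · have := wh_deg_anti l hl.1 hij; omega
    · exact hij
    · have := wh_deg_anti l hl.1 hij; omega
  rw [HeW, Polynomial.coeff_C_mul]
  change |_ * ((Matrix.of fun i j : Fin l.length =>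
    (⇑Polynomial.derivative)^[(i : ℕ)] (P j)).det).coeff _| * _ = _
  rw [h1, wh_vander, abs_mul, abs_inv, abs_mul, abs_mul]
  have hpos : |(Matrix.vandermonde fun i => (degVec l i : ℚ)).det| ≠ 0 := abs_ne_zero.mpr hdet
  rw [mul_assoc, inv_mul_eq_iff_eq_mul₀ hpos, hV]
  generalize |(Matrix.vandermonde fun j => ((whE q p (φ.symm j) : ℕ) : ℚ)).det| = v0 at *
  generalize |(Matrix.of fun i r : Fin q =>
        ((Polynomial.hermite (2 * a i + 0)).coeff (2 * (r : ℕ) + 0) : ℚ)).det| = d1 at *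
  generalize |(Matrix.of fun i r : Fin p =>
        ((Polynomial.hermite (2 * b i + 1)).coeff (2 * (r : ℕ) + 1) : ℚ)).det| = d2 at *
  generalize |(Matrix.vandermonde fun r => ((2 * a r + 0 : ℕ) : ℚ)).det| = v1 at *
  generalize |(Matrix.vandermonde fun r => ((2 * b r + 1 : ℕ) : ℚ)).det| = v2 at *
  generalize ∏ r, ∏ s, |((2 * a r + 0 : ℕ) : ℚ) - ((2 * b s + 1 : ℕ) : ℚ)| = X at *
  generalize ∏ r : Fin q, ((2 * (r : ℕ) + 0).factorial : ℚ) = F1 at *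
  generalize ∏ r : Fin p, ((2 * (r : ℕ) + 1).factorial : ℚ) = F2 at *
  generalize ∏ i, (whOddF (2 * a i + 0) : ℚ) = O1 at *
  generalize ∏ i, (whOddF (2 * b i + 1) : ℚ) = O2 at *
  linear_combination d1 * d2 * hE + d2 * F2 * b1 + O1 * v1 * b2 - v1 * v2 * hH

/-- The absolute value of the constant term of the remainder polynomial (i.e. the
coefficient of `X^{k(k+1)/2}` in `He_λ`) times `H(δ_k)` equals `H_odd(λ)`. -/
theorem abs_remainder_constant_term (l : List ℕ) (hl : IsPartition l) :
    |(HeW l).coeff (coreK l * (coreK l + 1) / 2)| * (Hstaircase (coreK l) : ℚ)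
      = (Hodd l : ℚ) := by
  exact wh_main l hl
end

section
/- Let λ be a partition with degree vector n_1 > … > n_ℓ, let p be the number of odd entries and q the number of even entries of the degree vector, and set k = p − q if p ≥ q and k = q − p − 1 otherwise. Then the natural number ∏_{i=1}^{k} (2i−1)^{k+1−i} (the product of the hook lengths of the staircase partition (k, k−1, …, 2, 1), which is the 2-core of λ) divides H_odd(λ), the product of all odd hook lengths of λ. -/
/-! Divisibility of products from counting prime powers. -/

lemma SH_fact {α : Type*} (s : Finset α) (f : α → ℕ) (hf : ∀ x ∈ s, 0 < f x) (p B : ℕ)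
    (hp : p.Prime) (hB : ∀ x ∈ s, f x < B) :
    (∏ x ∈ s, f x).factorization p
      = ∑ e ∈ Finset.Ico 1 B, (s.filter fun x => p ^ e ∣ f x).card := by
  rw [Nat.factorization_prod_apply (fun x hx => (hf x hx).ne')]
  simp_rw [Finset.card_filter]
  rw [Finset.sum_comm]
  refine Finset.sum_congr rfl fun x hx => ?_
  rw [Nat.factorization_eq_card_pow_dvd_of_lt hp (hf x hx)
    (lt_trans (hB x hx) (Nat.lt_pow_self hp.one_lt)), Finset.card_filter]

lemma SH_dvd {α β : Type*} (s : Finset α) (t : Finset β) (f : α → ℕ) (g : β → ℕ)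
    (hf : ∀ x ∈ s, 0 < f x) (hg : ∀ x ∈ t, 0 < g x)
    (h : ∀ p e : ℕ, p.Prime → 1 ≤ e →
      (s.filter fun x => p ^ e ∣ f x).card ≤ (t.filter fun x => p ^ e ∣ g x).card) :
    ∏ x ∈ s, f x ∣ ∏ x ∈ t, g x := by
  rw [← Nat.factorization_le_iff_dvd (Finset.prod_pos hf).ne' (Finset.prod_pos hg).ne']
  intro p
  by_cases hp : p.Prime
  · have h1 : ∀ x ∈ s, f x < ∑ x ∈ s, f x + ∑ x ∈ t, g x + 1 := fun x hx => by
      have := Finset.single_le_sum (f := f) (fun i _ => Nat.zero_le _) hx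
      omega
    have h2 : ∀ x ∈ t, g x < ∑ x ∈ s, f x + ∑ x ∈ t, g x + 1 := fun x hx => by
      have := Finset.single_le_sum (f := g) (fun i _ => Nat.zero_le _) hx
      omega
    rw [SH_fact s f hf p _ hp h1, SH_fact t g hg p _ hp h2]
    exact Finset.sum_le_sum fun e he => h p e hp (Finset.mem_Ico.1 he).1
  · simp [Nat.factorization_eq_zero_of_not_prime _ hp]

/-! The staircase count. -/

lemma SH_stair (h k : ℕ) :
    2 * (∑ i ∈ Finset.Icc 1 k, if (2 * h + 1) ∣ 2 * i - 1 then ((k + 1 - i : ℕ) : ℤ) else 0)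
      = (((k + h) / (2 * h + 1) : ℕ) : ℤ) * (2 * k + 1)
        - (2 * h + 1) * (((k + h) / (2 * h + 1) : ℕ) : ℤ) ^ 2 ∧
    (∑ i ∈ Finset.Icc 1 k, if (2 * h + 1) ∣ 2 * i - 1 then (1 : ℤ) else 0)
      = (((k + h) / (2 * h + 1) : ℕ) : ℤ) := by
  induction k with
  | zero =>
    have : h / (2 * h + 1) = 0 := Nat.div_eq_of_lt (by omega)
    simp [this]
  | succ k ih =>
    obtain ⟨ih1, ih2⟩ := ih
    have hs : (∑ i ∈ Finset.Icc 1 k,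
        if (2 * h + 1) ∣ 2 * i - 1 then ((k + 1 + 1 - i : ℕ) : ℤ) else 0)
        = (∑ i ∈ Finset.Icc 1 k, if (2 * h + 1) ∣ 2 * i - 1 then ((k + 1 - i : ℕ) : ℤ) else 0)
        + (∑ i ∈ Finset.Icc 1 k, if (2 * h + 1) ∣ 2 * i - 1 then (1 : ℤ) else 0) := by
      rw [← Finset.sum_add_distrib]
      refine Finset.sum_congr rfl fun i hi => ?_
      rw [Finset.mem_Icc] at hi
      split_ifs
      · have : k + 1 + 1 - i = (k + 1 - i) + 1 := by omega
        rw [this]; push_cast; ring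
      · simp
    rw [Finset.sum_Icc_succ_top (by omega), Finset.sum_Icc_succ_top (by omega), hs]
    have e1 : 2 * (k + 1) - 1 = 2 * k + 1 := by omega
    have e2 : k + 1 + 1 - (k + 1) = 1 := by omega
    rw [e1, e2, ih2]
    rw [mul_add, mul_add, ih1]
    by_cases hd : (2 * h + 1) ∣ 2 * k + 1
    · obtain ⟨c, hc⟩ := hd
      have hodd : Odd c := by
        have : Odd ((2 * h + 1) * c) := by rw [← hc]; exact ⟨k, rfl⟩
        exact (Nat.odd_mul.1 this).2
      obtain ⟨q, rfl⟩ := hodd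
      have hk : k + h + 1 = (2 * h + 1) * (q + 1) := by linarith
      have j1 : (k + h) / (2 * h + 1) = q := by
        have : k + h = 2 * h + (2 * h + 1) * q := by linarith
        rw [this, Nat.add_mul_div_left _ _ (by omega), Nat.div_eq_of_lt (by omega)]; simp
      have j2 : (k + 1 + h) / (2 * h + 1) = q + 1 := by
        have : k + 1 + h = (2 * h + 1) * (q + 1) := by linarith
        rw [this, Nat.mul_div_cancel_left _ (by omega)]
      have hd : (2 * h + 1) ∣ 2 * k + 1 := ⟨_, hc⟩
      have hcz : (2 * k + 1 : ℤ) = (2 * h + 1) * (2 * q + 1) := by exact_mod_cast hc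
      rw [j1, j2, if_pos hd, if_pos hd]
      push_cast
      refine ⟨?_, rfl⟩
      linear_combination -hcz
    · have j2 : (k + 1 + h) / (2 * h + 1) = (k + h) / (2 * h + 1) := by
        have : k + 1 + h = (k + h) + 1 := by ring
        rw [this, Nat.succ_div, if_neg]
        · simp
        · rintro ⟨c, hc⟩
          apply hd
          refine ⟨2 * c - 1, ?_⟩
          have hc0 : 1 ≤ c := by
            rcases Nat.eq_zero_or_pos c with rfl | h0
            · simp at hc
            · exact h0
          obtain ⟨c', rfl⟩ := Nat.exists_eq_add_of_le hc0
          have : 2 * (1 + c') - 1 = 2 * c' + 1 := by omega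
          rw [this]
          linarith
      rw [j2, if_neg hd, if_neg hd]
      push_cast
      exact ⟨by ring, by ring⟩

/-! The abacus count. -/

/-- parity sign: `+1` on odd numbers and `-1` on even ones. -/
def SHsgn (n : ℕ) : ℤ := if n % 2 = 1 then 1 else -1

/-- signed size of a residue class. -/
def SHx (P : ℕ) (N : Finset ℕ) (r : ℕ) : ℤ := ∑ n ∈ N.filter (fun n => n % P = r), SHsgn n

/-- lower bound for the number of odd hooks divisible by `P`. -/
def SHC (P : ℕ) (N : Finset ℕ) : ℤ :=
  ∑ n ∈ N, ((((n / P + 1) / 2 : ℕ) : ℤ)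
    - ((N.filter fun m => m < n ∧ m % P = n % P ∧ m % 2 ≠ n % 2).card : ℤ))

lemma SHx_eq (P : ℕ) (N : Finset ℕ) (n : ℕ) : SHx P N (n % P) =
    SHsgn n * (((N.filter fun m => m % P = n % P ∧ m % 2 = n % 2).card : ℤ)
     - ((N.filter fun m => m % P = n % P ∧ m % 2 ≠ n % 2).card : ℤ)) := by
  simp only [SHx, Finset.card_filter, Finset.sum_filter]
  push_cast
  rw [← Finset.sum_sub_distrib, Finset.mul_sum]
  refine Finset.sum_congr rfl fun m _ => ?_
  unfold SHsgn
  by_cases h1 : m % P = n % P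
  · rcases Nat.mod_two_eq_zero_or_one m with h2 | h2 <;>
      rcases Nat.mod_two_eq_zero_or_one n with h3 | h3 <;> simp [h1, h2, h3]
  · simp [h1]

lemma SHC_ge (h : ℕ) (N : Finset ℕ) :
    ∑ r ∈ Finset.range (2 * h + 1), SHx (2 * h + 1) N r * (SHx (2 * h + 1) N r - SHsgn r)
      ≤ 2 * SHC (2 * h + 1) N := by
  induction N using Finset.induction_on_max with
  | empty => simp [SHx, SHC]
  | insert n N hlt ih =>
    have hn : n ∉ N := fun hh => lt_irrefl _ (hlt n hh)
    set P := 2 * h + 1 with hP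
    have hC : SHC P (insert n N) = SHC P N + ((((n / P + 1) / 2 : ℕ) : ℤ)
        - ((N.filter fun m => m % P = n % P ∧ m % 2 ≠ n % 2).card : ℤ)) := by
      unfold SHC
      rw [Finset.sum_insert hn, add_comm]
      congr 1
      · refine Finset.sum_congr rfl fun m hm => ?_
        rw [Finset.filter_insert, if_neg]
        have := hlt m hm
        omega
      · rw [Finset.filter_insert, if_neg (by simp)]
        congr 3
        refine Finset.filter_congr fun m hm => ?_
        simp [hlt m hm]
    have hx1 : ∀ r, r ≠ n % P → SHx P (insert n N) r = SHx P N r := fun r hr => by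
      unfold SHx
      rw [Finset.filter_insert, if_neg (fun hh => hr hh.symm)]
    have hx2 : SHx P (insert n N) (n % P) = SHsgn n + SHx P N (n % P) := by
      unfold SHx
      rw [Finset.filter_insert, if_pos rfl, Finset.sum_insert (by simp [hn])]
    have hmem : n % P ∈ Finset.range P := Finset.mem_range.2 (Nat.mod_lt _ (by omega))
    rw [← Finset.add_sum_erase _ _ hmem] at ih ⊢
    have hsum : ∑ r ∈ (Finset.range P).erase (n % P),
        SHx P (insert n N) r * (SHx P (insert n N) r - SHsgn r)
        = ∑ r ∈ (Finset.range P).erase (n % P), SHx P N r * (SHx P N r - SHsgn r) := by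
      refine Finset.sum_congr rfl fun r hr => ?_
      rw [hx1 r (Finset.ne_of_mem_erase hr)]
    rw [hsum, hx2, hC]
    have hx := SHx_eq P N n
    set α := (N.filter fun m => m % P = n % P ∧ m % 2 = n % 2).card with hα
    set β := (N.filter fun m => m % P = n % P ∧ m % 2 ≠ n % 2).card
    set x := SHx P N (n % P)
    have hαle : α ≤ n / P / 2 := by
      rw [← Finset.card_range (n / P / 2), hα]
      have par : ∀ m, m % P = n % P → m % 2 = n % 2 → (m / P) % 2 = (n / P) % 2 := by
        intro m h1 h2
        have a1 := Nat.div_add_mod m P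
        have a2 := Nat.div_add_mod n P
        have b1 : P * (m / P) = 2 * (h * (m / P)) + m / P := by rw [hP]; ring
        have b2 : P * (n / P) = 2 * (h * (n / P)) + n / P := by rw [hP]; ring
        omega
      apply Finset.card_le_card_of_injOn (fun m => m / P / 2)
      · intro m hm
        simp only [Finset.coe_filter, Set.mem_ofPred_eq] at hm
        obtain ⟨hmN, h1, h2⟩ := hm
        have h3 := par m h1 h2
        have h4 := hlt m hmN
        have a1 := Nat.div_add_mod m P
        have a2 := Nat.div_add_mod n P
        have h5 : m / P < n / P := by
          by_contra hcon
          have := Nat.mul_le_mul_left P (not_lt.1 hcon)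
          omega
        simp only [Finset.coe_range, Set.mem_Iio]
        omega
      · intro m hm m' hm' heq
        simp only [Finset.coe_filter, Set.mem_ofPred_eq] at hm hm'
        have h3 := par m hm.2.1 hm.2.2
        have h4 := par m' hm'.2.1 hm'.2.2
        simp only at heq
        have h5 : m / P = m' / P := by omega
        rw [← Nat.div_add_mod m P, ← Nat.div_add_mod m' P, h5, hm.2.1, hm'.2.1]
    have hpar : n % 2 = (n / P + n % P) % 2 := by
      have a2 := Nat.div_add_mod n P
      have b2 : P * (n / P) = 2 * (h * (n / P)) + n / P := by rw [hP]; ring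
      omega
    have hss : SHsgn n * SHsgn n = 1 := by unfold SHsgn; split_ifs <;> norm_num
    have key : (1 : ℤ) - SHsgn n * SHsgn (n % P) + 2 * α ≤ 2 * (((n / P + 1) / 2 : ℕ) : ℤ) := by
      unfold SHsgn
      split_ifs <;> omega
    have expand : (SHsgn n + x) * (SHsgn n + x - SHsgn (n % P))
        = x * (x - SHsgn (n % P)) + (2 * (SHsgn n * x) + 1 - SHsgn n * SHsgn (n % P)) := by
      linear_combination hss
    have hsx : SHsgn n * x = α - β := by
      rw [hx, ← mul_assoc, hss, one_mul]
    rw [expand, hsx]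
    linarith

lemma SHx_sum (P : ℕ) (hP : 0 < P) (N : Finset ℕ) :
    ∑ r ∈ Finset.range P, SHx P N r = ∑ n ∈ N, SHsgn n := by
  unfold SHx
  exact Finset.sum_fiberwise_of_maps_to (fun n _ => Finset.mem_range.2 (Nat.mod_lt _ hP)) _

lemma SH_sgn_sum (h : ℕ) : ∑ r ∈ Finset.range (2 * h + 1), SHsgn r = -1 := by
  induction h with
  | zero => simp [SHsgn]
  | succ h ih =>
    have : 2 * (h + 1) + 1 = (2 * h + 1) + 1 + 1 := by ring
    rw [this, Finset.sum_range_succ, Finset.sum_range_succ, ih]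
    have e1 : (2 * h + 1) % 2 = 1 := by omega
    have e2 : (2 * h + 1 + 1) % 2 ≠ 1 := by omega
    simp only [SHsgn, e1, e2, if_true, if_false]
    norm_num

lemma SHC_tangent (h : ℕ) (N : Finset ℕ) (m : ℤ) :
    2 * m * (∑ n ∈ N, SHsgn n) - 2 * m * h - (2 * h + 1) * (m * (m - 1))
      ≤ 2 * SHC (2 * h + 1) N := by
  refine le_trans ?_ (SHC_ge h N)
  rw [← SHx_sum (2 * h + 1) (by omega) N]
  have hpt : ∀ r ∈ Finset.range (2 * h + 1),
      2 * m * SHx (2 * h + 1) N r - m * (SHsgn r + 1) - m * (m - 1)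
      ≤ SHx (2 * h + 1) N r * (SHx (2 * h + 1) N r - SHsgn r) := by
    intro r _
    generalize SHx (2 * h + 1) N r = x
    have hc : ∀ y : ℤ, 0 ≤ y * (y + 1) := fun y => by
      rcases le_or_gt 0 y with hy | hy
      · positivity
      · exact mul_nonneg_of_nonpos_of_nonpos (by omega) (by omega)
    unfold SHsgn
    split_ifs
    · have := hc (x - m - 1)
      nlinarith
    · have := hc (x - m)
      nlinarith
  have := Finset.sum_le_sum hpt
  rw [Finset.sum_sub_distrib, Finset.sum_sub_distrib, ← Finset.mul_sum, ← Finset.mul_sum,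
    Finset.sum_add_distrib, SH_sgn_sum] at this
  simp only [Finset.sum_const, Finset.card_range, nsmul_eq_mul] at this
  push_cast at this
  linarith

/-! Hooks. -/

lemma SH_conj (l : List ℕ) (j c : ℕ) (hc : c ≤ l.length)
    (h1 : ∀ i (hi : i < l.length), i < c → j ≤ l[i])
    (h2 : ∀ i (hi : i < l.length), c ≤ i → l[i] < j) : conjPart l j = c := by
  unfold conjPart
  conv_lhs => rw [← List.take_append_drop c l]
  rw [List.filter_append, List.filter_eq_self.2, List.filter_eq_nil_iff.2]
  · simp [hc]
  · intro a ha
    obtain ⟨i, hi, rfl⟩ := List.mem_iff_getElem.1 ha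
    simp only [List.length_drop] at hi
    have := h2 (c + i) (by omega) (by omega)
    simp [List.getElem_drop]
    omega
  · intro a ha
    obtain ⟨i, hi, rfl⟩ := List.mem_iff_getElem.1 ha
    simp only [List.length_take] at hi
    have := h1 i (by omega) (by omega)
    simp [List.getElem_take]
    omega

lemma SH_anti (l : List ℕ) (hl : IsPartition l) (i j : ℕ) (hij : i ≤ j) (hj : j < l.length) :
    l[j] ≤ l[i] := by
  rcases Nat.eq_or_lt_of_le hij with rfl | hlt
  · exact le_rfl
  · exact List.pairwise_iff_getElem.1 hl.1 i j (by omega) hj hlt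

lemma SH_surj (l : List ℕ) (hl : IsPartition l) (i : Fin l.length) (m : ℕ) (hm : m < degVec l i)
    (hmN : ∀ r, degVec l r ≠ m) :
    ∃ j ∈ Finset.Icc 1 (l.get i), hookLen l i j = degVec l i - m := by
  classical
  -- `c` = first row with degree at most `m`
  have hex : ∃ c, l.length ≤ c ∨ ∃ hc : c < l.length, degVec l ⟨c, hc⟩ < m := ⟨l.length, Or.inl le_rfl⟩
  let c := Nat.find hex
  have hcs : l.length ≤ c ∨ ∃ hc : c < l.length, degVec l ⟨c, hc⟩ < m := Nat.find_spec hex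
  have hcl : c ≤ l.length := Nat.find_min' hex (Or.inl le_rfl)
  have hcmin : ∀ r (hr : r < l.length), r < c → m < degVec l ⟨r, hr⟩ := by
    intro r hr hrc
    have := Nat.find_min hex hrc
    push Not at this
    have h1 := this.2 hr
    have h2 := hmN ⟨r, hr⟩
    omega
  clear_value c
  clear hex
  simp only [degVec, List.get_eq_getElem] at hcs hcmin hm
  have hi := i.2
  have hic : (i : ℕ) < c := by
    by_contra hcon
    rcases hcs with h1 | ⟨h1, h2⟩
    · omega
    · have := SH_anti l hl c i (by omega) hi
      omega
  have hjpos : l.length ≤ m + c := by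
    rcases hcs with h1 | ⟨h1, h2⟩ <;> omega
  have hc1 := hcmin (c - 1) (by omega) (by omega)
  have hai := SH_anti l hl i (c - 1) (by omega) (by omega)
  have hconj : conjPart l (m + 1 + c - l.length) = c := by
    apply SH_conj l _ c hcl
    · intro r hr hrc
      have := SH_anti l hl r (c - 1) (by omega) (by omega)
      omega
    · intro r hr hrc
      rcases hcs with h1 | ⟨h1, h2⟩
      · omega
      · have := SH_anti l hl c r (by omega) (by omega)
        omega
  refine ⟨m + 1 + c - l.length, ?_, ?_⟩
  · simp only [Finset.mem_Icc, List.get_eq_getElem]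
    omega
  · simp only [hookLen, hconj, degVec, List.get_eq_getElem]
    clear hcs hcmin hconj hmN
    have arith : ∀ x y L a : ℕ, m < x + (L - 1 - a) → a < L → a < c → c ≤ L → L ≤ m + c →
        m < y + (L - 1 - (c - 1)) → y ≤ x →
        x - (m + 1 + c - L) + (c - (a + 1)) + 1 = x + (L - 1 - a) - m := by
      intro x y L a h1 h2 h3 h4 h5 h6 h7
      omega
    exact arith _ _ _ _ hm hi hic hcl hjpos hc1 hai

lemma SH_degInj (l : List ℕ) (hl : IsPartition l) : Function.Injective (degVec l) := by
  have key : ∀ i j : Fin l.length, i < j → degVec l j < degVec l i := by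
    intro i j hij
    have h1 := SH_anti l hl i j (le_of_lt hij) j.2
    have := j.2
    have : (i : ℕ) < j := hij
    simp only [degVec, List.get_eq_getElem]
    omega
  intro i j hij
  rcases lt_trichotomy i j with h | h | h
  · have := key i j h; omega
  · exact h
  · have := key j i h; omega

lemma SH_row (l : List ℕ) (hl : IsPartition l) (h : ℕ) (hh : 1 ≤ h) (i : Fin l.length) :
    (((degVec l i / (2 * h + 1) + 1) / 2 : ℕ) : ℤ)
      - (((Finset.univ.image (degVec l)).filter fun m => m < degVec l i ∧
          m % (2 * h + 1) = degVec l i % (2 * h + 1) ∧ m % 2 ≠ degVec l i % 2).card : ℤ)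
    ≤ (((Finset.Icc 1 (l.get i)).filter fun j =>
        (2 * h + 1) ∣ if Odd (hookLen l i j) then hookLen l i j else 1).card : ℤ) := by
  classical
  set n := degVec l i with hn
  set P := 2 * h + 1 with hP
  set A := (Finset.univ.image (degVec l)).filter fun m => m < n ∧ m % P = n % P ∧ m % 2 ≠ n % 2
  set B := (Finset.Icc 1 (l.get i)).filter fun j =>
        P ∣ if Odd (hookLen l i j) then hookLen l i j else 1
  have hsub : Finset.range ((n / P + 1) / 2) ⊆
      A.image (fun m => (n - m) / P / 2) ∪ B.image (fun j => hookLen l i j / P / 2) := by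
    intro t ht
    rw [Finset.mem_range] at ht
    have h1 : 2 * t + 1 ≤ n / P := by omega
    have h2 : P * (2 * t + 1) ≤ n :=
      le_trans (Nat.mul_le_mul_left P h1) (Nat.mul_div_le n P)
    have hPpos : 0 < P := by omega
    have hge : 0 < P * (2 * t + 1) := by positivity
    have hodd : P * (2 * t + 1) = 2 * (h * (2 * t + 1) + t) + 1 := by rw [hP]; ring
    have hdiv : P * (2 * t + 1) / P / 2 = t := by
      rw [Nat.mul_div_cancel_left _ hPpos]; omega
    rw [Finset.mem_union]
    by_cases hmem : ∃ r, degVec l r = n - P * (2 * t + 1)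
    · left
      refine Finset.mem_image.2 ⟨n - P * (2 * t + 1), ?_, ?_⟩
      · refine Finset.mem_filter.2 ⟨?_, by omega, ?_, by omega⟩
        · obtain ⟨r, hr⟩ := hmem
          exact Finset.mem_image.2 ⟨r, Finset.mem_univ _, hr⟩
        · conv_rhs => rw [← Nat.sub_add_cancel h2]
          rw [Nat.add_mul_mod_self_left]
      · rw [Nat.sub_sub_self h2, hdiv]
    · right
      push Not at hmem
      obtain ⟨j, hj, hhook⟩ := SH_surj l hl i (n - P * (2 * t + 1)) (by omega) hmem
      rw [← hn, Nat.sub_sub_self h2] at hhook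
      refine Finset.mem_image.2 ⟨j, ?_, ?_⟩
      · refine Finset.mem_filter.2 ⟨hj, ?_⟩
        rw [hhook, if_pos ⟨_, hodd⟩]
        exact Dvd.intro _ rfl
      · simp only [hhook, hdiv]
  have hcard := Finset.card_le_card hsub
  rw [Finset.card_range] at hcard
  have c1 := Finset.card_union_le (A.image (fun m => (n - m) / P / 2))
    (B.image (fun j => hookLen l i j / P / 2))
  have c2 := Finset.card_image_le (s := A) (f := fun m => (n - m) / P / 2)
  have c3 := Finset.card_image_le (s := B) (f := fun j => hookLen l i j / P / 2)
  omega

lemma SH_d (l : List ℕ) (hl : IsPartition l) :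
    ∑ n ∈ Finset.univ.image (degVec l), SHsgn n = (oddCount l : ℤ) - evenCount l := by
  rw [Finset.sum_image (fun a _ b _ hab => SH_degInj l hl hab)]
  unfold oddCount evenCount
  simp only [Finset.card_filter]
  push_cast
  rw [← Finset.sum_sub_distrib]
  refine Finset.sum_congr rfl fun i _ => ?_
  unfold SHsgn
  rcases Nat.mod_two_eq_zero_or_one (degVec l i) with h | h
  · simp [Nat.odd_iff, Nat.even_iff, h]
  · simp [Nat.odd_iff, Nat.even_iff, h]

lemma SH_count (l : List ℕ) (hl : IsPartition l) (h : ℕ) (hh : 1 ≤ h) :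
    (∑ i ∈ Finset.Icc 1 (coreK l),
        if (2 * h + 1) ∣ 2 * i - 1 then ((coreK l + 1 - i : ℕ) : ℤ) else 0)
    ≤ ∑ i : Fin l.length, (((Finset.Icc 1 (l.get i)).filter fun j =>
        (2 * h + 1) ∣ if Odd (hookLen l i j) then hookLen l i j else 1).card : ℤ) := by
  have hrow := Finset.sum_le_sum (s := Finset.univ) fun i _ => SH_row l hl h hh i
  have hC : SHC (2 * h + 1) (Finset.univ.image (degVec l)) ≤ ∑ i : Fin l.length,
      (((Finset.Icc 1 (l.get i)).filter fun j =>
        (2 * h + 1) ∣ if Odd (hookLen l i j) then hookLen l i j else 1).card : ℤ) := by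
    refine le_trans (le_of_eq ?_) hrow
    unfold SHC
    rw [Finset.sum_image (fun a _ b _ hab => SH_degInj l hl hab)]
  have hst := (SH_stair h (coreK l)).1
  have hd := SH_d l hl
  have ht := SHC_tangent h (Finset.univ.image (degVec l))
  rw [hd] at ht
  set J : ℤ := (((coreK l + h) / (2 * h + 1) : ℕ) : ℤ)
  by_cases hk : evenCount l ≤ oddCount l
  · have hkk : (oddCount l : ℤ) - evenCount l = coreK l := by
      unfold coreK; rw [if_pos hk]; omega
    rw [hkk] at ht
    have := ht J
    nlinarith
  · have hkk : (oddCount l : ℤ) - evenCount l = -(coreK l) - 1 := by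
      unfold coreK; rw [if_neg hk]; omega
    rw [hkk] at ht
    have := ht (-J)
    nlinarith

/-- The product of the hook lengths of the 2-core (the staircase `(k,k−1,…,1)`)
divides the product of all odd hook lengths of `λ`. -/
theorem staircaseHooks_dvd_Hodd (l : List ℕ) (hl : IsPartition l) :
    Hstaircase (coreK l) ∣ Hodd l := by
  have e1 : Hstaircase (coreK l) = ∏ x ∈ (Finset.Icc 1 (coreK l)).sigma
      (fun i => Finset.range (coreK l + 1 - i)), (2 * x.1 - 1) := by
    rw [Finset.prod_sigma]
    simp [Hstaircase]
  have e2 : Hodd l = ∏ x ∈ (Finset.univ : Finset (Fin l.length)).sigma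
      (fun i => Finset.Icc 1 (l.get i)),
      if Odd (hookLen l x.1 x.2) then hookLen l x.1 x.2 else 1 := by
    rw [Finset.prod_sigma]
    rfl
  rw [e1, e2]
  apply SH_dvd
  · intro x hx
    have := (Finset.mem_Icc.1 (Finset.mem_sigma.1 hx).1).1
    omega
  · intro x _
    split_ifs
    · unfold hookLen; omega
    · exact one_pos
  · intro p e hp he
    rcases Nat.even_or_odd (p ^ e) with hev | hodd
    · rw [Finset.filter_eq_empty_iff.2]
      · simp
      · intro x hx hdvd
        have h1 := (Finset.mem_Icc.1 (Finset.mem_sigma.1 hx).1).1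
        have h2 := hev.two_dvd.trans hdvd
        omega
    · obtain ⟨h, hh⟩ := hodd
      have h1 : 1 ≤ h := by
        have := Nat.one_lt_pow (by omega : e ≠ 0) hp.one_lt
        omega
      rw [hh]
      have := SH_count l hl h h1
      rw [Finset.card_filter, Finset.card_filter, Finset.sum_sigma, Finset.sum_sigma]
      have a1 : ∀ i ∈ Finset.Icc 1 (coreK l),
          (∑ _s ∈ Finset.range (coreK l + 1 - i), if (2 * h + 1) ∣ 2 * i - 1 then 1 else 0)
          = if (2 * h + 1) ∣ 2 * i - 1 then coreK l + 1 - i else 0 := fun i _ => by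
        split_ifs <;> simp
      rw [Finset.sum_congr rfl a1]
      simp only [← Finset.card_filter]
      refine Int.ofNat_le.1 ?_
      rw [Nat.cast_sum, Nat.cast_sum]
      simp only [Nat.cast_ite, Nat.cast_zero]
      exact this
end
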